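/- (Per-iteration inequality of mirror descent) Let Q ⊆ E be a compact convex set, ψ : Q → ℝ a differentiable σ-strongly convex prox-function (σ > 0), f : Q → ℝ a convex continuous function, x* a minimizer of f over Q, γ_k > 0, x^k ∈ Q, ∇f(x^k) ∈ ∂f(x^k), and x^{k+1} = argmin_{x ∈ Q} { ⟨∇f(x^k), x⟩ + (1/γ_k) V_ψ(x, x^k) }. Then f(x^k) − f(x*) ≤ (1/γ_k) ( V_ψ(x*, x^k) − V_ψ(x*, x^{k+1}) ) + (γ_k / (2σ)) ‖∇f(x^k)‖_*². -/

import Mathlib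

/-- The Bregman divergence `V_ψ(x, y) = ψ(x) − ψ(y) − ⟨∇ψ(y), x − y⟩` associated with a
differentiable function `ψ` with gradient `ψ'`. -/
noncomputable def bregman {E : Type*} [NormedAddCommGroup E] [NormedSpace ℝ E]
    (ψ : E → ℝ) (ψ' : E → E →L[ℝ] ℝ) (x y : E) : ℝ :=
  ψ x - ψ y - ψ' y (x - y)

/-- `g` is a subgradient of `f` at `x` relative to `Q`:
`f(x) + ⟨g, y − x⟩ ≤ f(y)` for all `y ∈ Q`. -/
def IsSubgradientAt {E : Type*} [NormedAddCommGroup E] [NormedSpace ℝ E]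
    (f : E → ℝ) (Q : Set E) (g : E →L[ℝ] ℝ) (x : E) : Prop :=
  ∀ y ∈ Q, f x + g (y - x) ≤ f y

/-- First-order optimality: at a minimizer over a convex set, the derivative is nonnegative in
every feasible direction. -/
theorem IsMinOn.hasFDerivWithinAt_apply_sub_nonneg
    {E : Type*} [NormedAddCommGroup E] [NormedSpace ℝ E] {Q : Set E} (hQ : Convex ℝ Q)
    {h : E → ℝ} {h' : E →L[ℝ] ℝ} {x y : E} (hx : x ∈ Q) (hy : y ∈ Q)
    (hmin : IsMinOn h Q x) (hder : HasFDerivWithinAt h h' Q x) : 0 ≤ h' (y - x) :=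
  hmin.localize.hasFDerivWithinAt_nonneg hder
    (sub_mem_posTangentConeAt_of_segment_subset (hQ.segment_subset hx hy))

/-- The Bregman divergence of a `σ`-strongly convex function is at least `σ / 2 * ‖y - x‖ ^ 2`. -/
theorem StrongConvexOn.le_bregman
    {E : Type*} [NormedAddCommGroup E] [NormedSpace ℝ E] {Q : Set E}
    {ψ : E → ℝ} {ψ' : E → E →L[ℝ] ℝ} {σ : ℝ} {x y : E} (hψ : StrongConvexOn Q σ ψ)
    (hx : x ∈ Q) (hy : y ∈ Q) (hder : HasFDerivWithinAt ψ (ψ' x) Q x) :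
    σ / 2 * ‖y - x‖ ^ 2 ≤ bregman ψ ψ' y x := by
  set c := σ / 2 * ‖y - x‖ ^ 2 with hc
  have hmaps : Set.MapsTo (fun t : ℝ => x + t • (y - x)) (Set.Icc 0 1) Q := fun t ht =>
    hψ.1.add_smul_sub_mem hx hy ht
  -- The convexity gap along the segment from `x` to `y` is minimal at `t = 0`.
  let φ : ℝ → ℝ := fun t => (1 - t) * ψ x + t * ψ y - (1 - t) * t * c - ψ (x + t • (y - x))
  have hmin : IsMinOn φ (Set.Icc 0 1) 0 := by
    intro t ht
    have key := hψ.2 hx hy (sub_nonneg.2 ht.2) ht.1 (sub_add_cancel 1 t)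
    have hpt : (1 - t) • x + t • y = x + t • (y - x) := by module
    rw [hpt, norm_sub_rev x y] at key
    simp only [smul_eq_mul, ← hc] at key
    simp only [Set.mem_ofPred_eq, φ, zero_smul, add_zero]
    linarith
  have hline : HasDerivWithinAt (fun t : ℝ => x + t • (y - x)) (y - x) (Set.Icc 0 1) 0 := by
    simpa using (((hasDerivAt_id (0 : ℝ)).smul_const (y - x)).const_add x).hasDerivWithinAt
  have hcomp : HasDerivWithinAt (fun t : ℝ => ψ (x + t • (y - x))) (ψ' x (y - x))
      (Set.Icc 0 1) 0 :=
    HasFDerivWithinAt.comp_hasDerivWithinAt (0 : ℝ) (by simpa using hder) hline hmaps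
  have hid := hasDerivWithinAt_id (0 : ℝ) (Set.Icc 0 1)
  have hφ : HasDerivWithinAt φ (ψ y - ψ x - c - ψ' x (y - x)) (Set.Icc 0 1) 0 := by
    refine (((((hid.const_sub 1).mul_const (ψ x)).add (hid.mul_const (ψ y))).sub
      (((hid.const_sub 1).mul hid).mul_const c)).sub hcomp).congr_deriv ?_
    simp only [id_eq]
    ring
  have h := hmin.hasFDerivWithinAt_apply_sub_nonneg (convex_Icc (0 : ℝ) 1) (y := 1)
    (by simp) (by simp) hφ.hasFDerivWithinAt
  simp only [sub_zero, ContinuousLinearMap.toSpanSingleton_apply, one_smul] at h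
  unfold bregman
  linarith

/-- **Per-iteration inequality of mirror descent.** With `x^{k+1}` the mirror descent step from
`x^k` with step size `γ_k > 0` and subgradient `∇f(x^k)`,
`f(x^k) − f(x*) ≤ (1/γ_k)(V_ψ(x*, x^k) − V_ψ(x*, x^{k+1})) + (γ_k/(2σ))‖∇f(x^k)‖_*²`. -/
theorem mirror_descent_per_iteration
    {E : Type*} [NormedAddCommGroup E] [NormedSpace ℝ E] [FiniteDimensional ℝ E]
    (Q : Set E) (hQcomp : IsCompact Q) (hQconv : Convex ℝ Q)
    (ψ : E → ℝ) (ψ' : E → E →L[ℝ] ℝ) (σ : ℝ) (hσ : 0 < σ)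
    (hψdiff : ∀ x ∈ Q, HasFDerivWithinAt ψ (ψ' x) Q x)
    (hψstrong : StrongConvexOn Q σ ψ)
    (f : E → ℝ) (hfconv : ConvexOn ℝ Q f) (hfcont : ContinuousOn f Q)
    (xstar : E) (hxstarQ : xstar ∈ Q) (hxstar : IsMinOn f Q xstar)
    (γk : ℝ) (hγk : 0 < γk)
    (xk : E) (hxkQ : xk ∈ Q)
    (gk : E →L[ℝ] ℝ) (hgk : IsSubgradientAt f Q gk xk)
    (xk1 : E) (hxk1Q : xk1 ∈ Q)
    (hstep : IsMinOn (fun x => gk x + (1 / γk) * bregman ψ ψ' x xk) Q xk1) :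
    f xk - f xstar ≤
      (1 / γk) * (bregman ψ ψ' xstar xk - bregman ψ ψ' xstar xk1)
        + γk / (2 * σ) * ‖gk‖ ^ 2 := by
  set d := ‖xk1 - xk‖
  have hder : HasFDerivWithinAt (fun x => gk x + (1 / γk) * bregman ψ ψ' x xk)
      (gk + (1 / γk) • (ψ' xk1 - ψ' xk)) Q xk1 := by
    have hlin : HasFDerivWithinAt (fun x => ψ' xk (x - xk)) (ψ' xk) Q xk1 :=
      ((ψ' xk).hasFDerivAt.comp xk1 ((hasFDerivAt_id xk1).sub_const xk)).hasFDerivWithinAt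
    exact gk.hasFDerivWithinAt.add
      ((((hψdiff xk1 hxk1Q).sub_const (ψ xk)).sub hlin).const_mul (1 / γk))
  have hopt := hstep.hasFDerivWithinAt_apply_sub_nonneg hQconv hxk1Q hxstarQ hder
  have hsub := hgk xstar hxstarQ
  have hstrong := hψstrong.le_bregman hxkQ hxk1Q (hψdiff xk hxkQ)
  have hdual : -gk (xk1 - xk) ≤ ‖gk‖ * d :=
    (neg_le_abs _).trans (gk.le_opNorm (xk1 - xk))
  have hyoung : ‖gk‖ * d ≤ γk / (2 * σ) * ‖gk‖ ^ 2 + (1 / γk) * (σ / 2 * d ^ 2) := by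
    have hsq : γk / (2 * σ) * ‖gk‖ ^ 2 + (1 / γk) * (σ / 2 * d ^ 2) - ‖gk‖ * d
        = (γk * ‖gk‖ - σ * d) ^ 2 / (2 * σ * γk) := by
      field_simp
      ring
    have : 0 ≤ (γk * ‖gk‖ - σ * d) ^ 2 / (2 * σ * γk) := by positivity
    linarith
  have hscaled := mul_le_mul_of_nonneg_left hstrong (one_div_pos.2 hγk).le
  have hthree : bregman ψ ψ' xstar xk - bregman ψ ψ' xstar xk1 - bregman ψ ψ' xk1 xk
      = (ψ' xk1 - ψ' xk) (xstar - xk1) := by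
    simp only [bregman, map_sub, sub_apply]
    ring
  have hsplit : gk (xstar - xk) = gk (xstar - xk1) + gk (xk1 - xk) := by
    rw [← map_add, sub_add_sub_cancel]
  simp only [add_apply, smul_apply, smul_eq_mul, ← hthree] at hopt
  linarith
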